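/- With E_{I,J} as defined, for all subsets I, J ⊆ {1,…,n} with |I| ≡ |J| (mod 2), one has Σ_{K ⊆ {1,…,n}} E_{I,K} · E_{K,J} = δ_{I,J} · Σ_{i=1}^n λ_i X_i^{p_i} in k[X_1,…,X_n], where δ_{I,J} is 1 if I = J and 0 otherwise. Equivalently, the matrix M (rows indexed by even subsets, columns by odd subsets, entries M_{I,J} = E_{I,J}) and the matrix N (rows indexed by odd subsets, columns by even subsets, entries N_{I,J} = E_{I,J}) satisfy M·N = (Σ_i λ_i X_i^{p_i})·Id and N·M = (Σ_i λ_i X_i^{p_i})·Id, i.e. (M,N) is a matrix factorization of Σ_i λ_i X_i^{p_i}. -/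

import Mathlib

open MvPolynomial

/-- The entry `E_{I,J}` of the matrix factorization: it equals
`(−1)^{p(i,I)} X_i^{ℓ_i}` if `I = J ∪ {i}` with `i ∉ J`, it equals
`(−1)^{p(j,J)} λ_j X_j^{p_j−ℓ_j}` if `J = I ∪ {j}` with `j ∉ I`, and `0` otherwise;
here `p(i,I) = |{j ∈ I : j ≤ i}|`. -/
noncomputable def MFentry (k : Type*) [CommRing k] (n : ℕ) (lam : Fin n → k)
    (p ℓ : Fin n → ℕ) (I J : Finset (Fin n)) : MvPolynomial (Fin n) k :=
  if J ⊆ I ∧ (I \ J).card = 1 then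
    ∑ i ∈ I \ J, (-1 : MvPolynomial (Fin n) k) ^ (I.filter (· ≤ i)).card * X i ^ ℓ i
  else if I ⊆ J ∧ (J \ I).card = 1 then
    ∑ j ∈ J \ I,
      (-1 : MvPolynomial (Fin n) k) ^ (J.filter (· ≤ j)).card * C (lam j) * X j ^ (p j - ℓ j)
  else 0

/-- Toggle membership of `i` in `I`. -/
def MFtog {n : ℕ} (I : Finset (Fin n)) (i : Fin n) : Finset (Fin n) :=
  if i ∈ I then I.erase i else insert i I

lemma MFtog_mem {n : ℕ} (I : Finset (Fin n)) (i m : Fin n) :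
    m ∈ MFtog I i ↔ (if m = i then m ∉ I else m ∈ I) := by
  unfold MFtog
  by_cases h : i ∈ I <;> by_cases h2 : m = i <;> simp_all

/-- The sign. -/
noncomputable def MFsg (k : Type*) [CommRing k] {n : ℕ} (I : Finset (Fin n)) (j : Fin n) :
    MvPolynomial (Fin n) k := ∏ m ∈ I, if m < j then -1 else 1

lemma MFsg_eq (k : Type*) [CommRing k] {n : ℕ} (I : Finset (Fin n)) (j : Fin n) :
    MFsg k I j = (-1) ^ (I.filter (· < j)).card := by
  unfold MFsg
  rw [Finset.prod_ite]
  simp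

lemma MFsg_insert (k : Type*) [CommRing k] {n : ℕ} (I : Finset (Fin n)) (i j : Fin n)
    (h : i ∉ I) : MFsg k (insert i I) j = (if i < j then -1 else 1) * MFsg k I j := by
  unfold MFsg
  rw [Finset.prod_insert h]

lemma MFsg_tog (k : Type*) [CommRing k] {n : ℕ} (I : Finset (Fin n)) (i j : Fin n) :
    MFsg k (MFtog I i) j = (if i < j then -1 else 1) * MFsg k I j := by
  unfold MFtog
  split_ifs with h h2 h2
  · have := MFsg_insert k (I.erase i) i j (by simp)
    rw [Finset.insert_erase h, if_pos h2] at this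
    rw [this]; ring
  · have := MFsg_insert k (I.erase i) i j (by simp)
    rw [Finset.insert_erase h, if_neg h2] at this
    rw [this]; ring
  · rw [MFsg_insert k I i j h, if_pos h2]
  · rw [MFsg_insert k I i j h, if_neg h2]

lemma MFsg_sq (k : Type*) [CommRing k] {n : ℕ} (I : Finset (Fin n)) (j : Fin n) :
    MFsg k I j * MFsg k I j = 1 := by
  rw [MFsg_eq, ← mul_pow]; simp

/-- The coefficient of the toggle. -/
noncomputable def MFco (k : Type*) [CommRing k] {n : ℕ} (lam : Fin n → k)
    (p ℓ : Fin n → ℕ) (I : Finset (Fin n)) (i : Fin n) : MvPolynomial (Fin n) k :=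
  - MFsg k I i * (if i ∈ I then X i ^ ℓ i else C (lam i) * X i ^ (p i - ℓ i))

lemma MFcard_le {n : ℕ} (I : Finset (Fin n)) (i : Fin n) (h : i ∉ I) :
    ((insert i I).filter (· ≤ i)).card = (I.filter (· < i)).card + 1 := by
  have : (insert i I).filter (· ≤ i) = insert i (I.filter (· < i)) := by
    ext m
    simp only [Finset.mem_filter, Finset.mem_insert]
    grind
  rw [this, Finset.card_insert_of_notMem (by simp)]

lemma MFtog_inj {n : ℕ} (I : Finset (Fin n)) (i j : Fin n) (h : MFtog I i = MFtog I j) :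
    i = j := by
  have h1 := MFtog_mem I i i
  rw [h, MFtog_mem] at h1
  by_contra hne
  simp [hne] at h1

lemma MFentry_tog (k : Type*) [CommRing k] (n : ℕ) (lam : Fin n → k)
    (p ℓ : Fin n → ℕ) (I : Finset (Fin n)) (i : Fin n) :
    MFentry k n lam p ℓ I (MFtog I i) = MFco k lam p ℓ I i := by
  unfold MFentry MFco MFtog
  by_cases h : i ∈ I
  · have e : I \ I.erase i = {i} := by
      ext m; simp only [Finset.mem_sdiff, Finset.mem_erase, Finset.mem_singleton]; grind
    have c := MFcard_le (I.erase i) i (by simp)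
    have e2 : (I.erase i).filter (· < i) = I.filter (· < i) := by
      ext m; simp only [Finset.mem_filter, Finset.mem_erase]; grind
    rw [Finset.insert_erase h, e2] at c
    rw [if_pos h, if_pos h, e, if_pos ⟨Finset.erase_subset _ _, by simp⟩, Finset.sum_singleton,
      c, MFsg_eq]
    ring
  · have e : insert i I \ I = {i} := by
      ext m; simp only [Finset.mem_sdiff, Finset.mem_insert, Finset.mem_singleton]; grind
    have c := MFcard_le I i h
    have hn : ¬ (insert i I ⊆ I ∧ (I \ insert i I).card = 1) := by
      rintro ⟨h1, -⟩
      exact h (h1 (Finset.mem_insert_self _ _))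
    rw [if_neg h, if_neg h, if_neg hn, e, if_pos ⟨Finset.subset_insert _ _, by simp⟩,
      Finset.sum_singleton, c, MFsg_eq]
    ring

lemma MFentry_zero (k : Type*) [CommRing k] (n : ℕ) (lam : Fin n → k)
    (p ℓ : Fin n → ℕ) (I K : Finset (Fin n)) (h : ∀ i, K ≠ MFtog I i) :
    MFentry k n lam p ℓ I K = 0 := by
  unfold MFentry
  rw [if_neg, if_neg]
  · rintro ⟨h1, h2⟩
    obtain ⟨i, hi⟩ := Finset.card_eq_one.1 h2
    apply h i
    ext m
    have h3 := Finset.ext_iff.1 hi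
    simp only [Finset.mem_sdiff, Finset.mem_singleton] at h3
    rw [MFtog_mem]
    have := @h1 m
    have := h3 m
    split_ifs <;> grind
  · rintro ⟨h1, h2⟩
    obtain ⟨i, hi⟩ := Finset.card_eq_one.1 h2
    apply h i
    ext m
    have h3 := Finset.ext_iff.1 hi
    simp only [Finset.mem_sdiff, Finset.mem_singleton] at h3
    rw [MFtog_mem]
    have := @h1 m
    have := h3 m
    split_ifs <;> grind

lemma MFentry_eq (k : Type*) [CommRing k] (n : ℕ) (lam : Fin n → k)
    (p ℓ : Fin n → ℕ) (I K : Finset (Fin n)) :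
    MFentry k n lam p ℓ I K = ∑ i, if K = MFtog I i then MFco k lam p ℓ I i else 0 := by
  by_cases h : ∃ i, K = MFtog I i
  · obtain ⟨i, rfl⟩ := h
    rw [MFentry_tog, Finset.sum_eq_single i]
    · simp
    · intro j _ hj
      rw [if_neg]
      exact fun h => hj (MFtog_inj I i j h).symm
    · simp
  · push Not at h
    rw [MFentry_zero k n lam p ℓ I K h]
    simp [h]

lemma MFtog_tog {n : ℕ} (I : Finset (Fin n)) (i : Fin n) : MFtog (MFtog I i) i = I := by
  ext m
  simp only [MFtog_mem]
  split_ifs <;> simp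

lemma MFtog_comm {n : ℕ} (I : Finset (Fin n)) (i j : Fin n) :
    MFtog (MFtog I i) j = MFtog (MFtog I j) i := by
  ext m
  simp only [MFtog_mem]
  split_ifs <;> simp

lemma MFtog_tog_eq {n : ℕ} (I : Finset (Fin n)) (i j : Fin n) (h : I = MFtog (MFtog I i) j) :
    i = j := by
  apply MFtog_inj I
  conv_rhs => rw [h, MFtog_tog]

lemma MFco_self (k : Type*) [CommRing k] {n : ℕ} (lam : Fin n → k)
    (p ℓ : Fin n → ℕ) (I : Finset (Fin n)) (i : Fin n) (h : ℓ i ≤ p i) :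
    MFco k lam p ℓ I i * MFco k lam p ℓ (MFtog I i) i = C (lam i) * X i ^ p i := by
  unfold MFco
  have hx : (X i : MvPolynomial (Fin n) k) ^ p i = X i ^ ℓ i * X i ^ (p i - ℓ i) := by
    rw [← pow_add, Nat.add_sub_cancel' h]
  have hs := MFsg_sq k I i
  rw [MFsg_tog, hx]
  simp only [MFtog_mem, lt_irrefl, if_true, if_false]
  by_cases hi : i ∈ I
  · simp only [hi, not_true, if_true, if_false]
    linear_combination (X i ^ ℓ i * X i ^ (p i - ℓ i) * C (lam i)) * hs
  · simp only [hi, not_false_iff, if_true, if_false]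
    linear_combination (X i ^ ℓ i * X i ^ (p i - ℓ i) * C (lam i)) * hs

lemma MFco_swap (k : Type*) [CommRing k] {n : ℕ} (lam : Fin n → k)
    (p ℓ : Fin n → ℕ) (I : Finset (Fin n)) (i j : Fin n) (h : i ≠ j) :
    MFco k lam p ℓ I i * MFco k lam p ℓ (MFtog I i) j +
      MFco k lam p ℓ I j * MFco k lam p ℓ (MFtog I j) i = 0 := by
  unfold MFco
  simp only [MFsg_tog, MFtog_mem, h, h.symm, if_false]
  rcases lt_or_gt_of_ne h with h1 | h1
  · rw [if_pos h1, if_neg h1.not_gt]; ring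
  · rw [if_pos h1, if_neg h1.not_gt]; ring

/-- For all subsets `I, J ⊆ {1,…,n}` with `|I| ≡ |J| (mod 2)` one has
`Σ_K E_{I,K}·E_{K,J} = δ_{I,J}·Σ_i λ_i X_i^{p_i}`; i.e. the matrices `M` (rows indexed
by even subsets, columns by odd ones) and `N` (rows odd, columns even) with entries
`E_{I,J}` form a matrix factorization `M·N = N·M = (Σ_i λ_i X_i^{p_i})·Id`. -/
theorem matrix_factorization (k : Type*) [CommRing k] (n : ℕ) (hn : 1 ≤ n)
    (lam : Fin n → k) (p ℓ : Fin n → ℕ) (hp : ∀ i, 2 ≤ p i)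
    (hℓ : ∀ i, 1 ≤ ℓ i ∧ ℓ i ≤ p i - 1)
    (I J : Finset (Fin n)) (hIJ : I.card % 2 = J.card % 2) :
    ∑ K : Finset (Fin n), MFentry k n lam p ℓ I K * MFentry k n lam p ℓ K J =
      if I = J then ∑ i, C (lam i) * X i ^ p i else 0 := by
  have key : ∑ K : Finset (Fin n), MFentry k n lam p ℓ I K * MFentry k n lam p ℓ K J =
      ∑ i, ∑ j, if J = MFtog (MFtog I i) j then
        MFco k lam p ℓ I i * MFco k lam p ℓ (MFtog I i) j else 0 := by
    calc _ = ∑ K : Finset (Fin n), ∑ i, (if K = MFtog I i then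
            MFco k lam p ℓ I i * MFentry k n lam p ℓ K J else 0) := by
          refine Finset.sum_congr rfl fun K _ => ?_
          rw [MFentry_eq k n lam p ℓ I K, Finset.sum_mul]
          refine Finset.sum_congr rfl fun i _ => ?_
          rw [ite_mul, zero_mul]
      _ = _ := by
          rw [Finset.sum_comm]
          refine Finset.sum_congr rfl fun i _ => ?_
          rw [Finset.sum_ite_eq' Finset.univ (MFtog I i), if_pos (Finset.mem_univ _),
            MFentry_eq, Finset.mul_sum]
          refine Finset.sum_congr rfl fun j _ => ?_
          rw [mul_ite, mul_zero]
  rw [key]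
  split_ifs with h
  · subst h
    refine Finset.sum_congr rfl fun i _ => ?_
    rw [Finset.sum_eq_single i]
    · rw [if_pos (MFtog_tog I i).symm, MFco_self]
      have := hℓ i
      omega
    · intro j _ hj
      rw [if_neg]
      exact fun h => hj (MFtog_tog_eq I i j h).symm
    · simp
  · rw [← Finset.sum_product']
    have hne : ∀ i j, J = MFtog (MFtog I i) j → i ≠ j := by
      rintro i j h1 rfl
      rw [MFtog_tog] at h1
      exact h h1.symm
    refine Finset.sum_involution (fun a _ => (a.2, a.1)) ?_ ?_ ?_ ?_
    · rintro ⟨i, j⟩ _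
      dsimp only
      rw [MFtog_comm I j i]
      split_ifs with h1
      · exact MFco_swap k lam p ℓ I i j (hne i j h1)
      · simp
    · rintro ⟨i, j⟩ _ h0 heq
      dsimp only at h0 heq
      have h1 : J = MFtog (MFtog I i) j := by
        by_contra h1
        exact h0 (if_neg h1)
      exact hne i j h1 (Prod.mk.inj heq).2
    · intros; simp
    · intros; rfl
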